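/- arXiv:2402.18290 — 5 statements merged into one kernel-verified Lean document; each statement's English description precedes it below -/
import Mathlib

section
/- Let V be a finitely generated free ℤ-module and let λ : V × V → ℤ be a nondegenerate symmetric bilinear form with adjoint λ̂ : V → Hom(V,ℤ). Then for every x ∈ Hom(V,ℤ) there exist s ∈ ℤ \ {0} and z ∈ V with s·x = λ̂(z); moreover the assignment ([x],[y]) ↦ (1/s)·y(z) mod ℤ is independent of the choices of s and z and of the representatives x, y of the classes [x],[y] ∈ coker(λ̂), and it defines a symmetric bilinear form ∂λ : coker(λ̂) × coker(λ̂) → ℚ/ℤ. -/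
/-- Let V be a finitely generated free ℤ-module and λ a nondegenerate symmetric bilinear
form on V, with adjoint λ̂ : V → Hom(V,ℤ), v ↦ λ(v,−) (here `lam` is the adjoint, so
λ(x,y) = lam x y).  Then every x ∈ Hom(V,ℤ) satisfies s • x = λ̂(z) for some s ∈ ℤ \ {0}
and z ∈ V, and ([x],[y]) ↦ (1/s)·y(z) mod ℤ is a well-defined (independent of all choices)
symmetric bilinear form ∂λ : coker(λ̂) × coker(λ̂) → ℚ/ℤ. -/
theorem boundary_linking_form_exists
    (V : Type*) [AddCommGroup V] [Module ℤ V] [Module.Free ℤ V] [Module.Finite ℤ V]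
    (lam : V →ₗ[ℤ] Module.Dual ℤ V)
    (hsymm : ∀ x y : V, lam x y = lam y x)
    (hnd : ∀ x : V, (∀ y : V, lam x y = 0) → x = 0) :
    (∀ x : Module.Dual ℤ V, ∃ s : ℤ, s ≠ 0 ∧ ∃ z : V, s • x = lam z) ∧
    ∃ b : (Module.Dual ℤ V ⧸ LinearMap.range lam) →
        (Module.Dual ℤ V ⧸ LinearMap.range lam) → AddCircle (1 : ℚ),
      (∀ (x y : Module.Dual ℤ V) (s : ℤ) (z : V), s ≠ 0 → s • x = lam z →
        b (Submodule.Quotient.mk x) (Submodule.Quotient.mk y) =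
          (((1 / (s : ℚ)) * (y z : ℚ) : ℚ) : AddCircle (1 : ℚ))) ∧
      (∀ ξ η, b ξ η = b η ξ) ∧
      (∀ ξ η₁ η₂, b ξ (η₁ + η₂) = b ξ η₁ + b ξ η₂) ∧
      (∀ ξ₁ ξ₂ η, b (ξ₁ + ξ₂) η = b ξ₁ η + b ξ₂ η) := by
  have part1 : ∀ x : Module.Dual ℤ V, ∃ s : ℤ, s ≠ 0 ∧ ∃ z : V, s • x = lam z := by
    have hinj : Function.Injective lam := by
      rw [← LinearMap.ker_eq_bot, LinearMap.ker_eq_bot']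
      intro m hm
      exact hnd m (fun y => by rw [hm]; rfl)
    have h1 := Submodule.finrank_quotient_add_finrank (LinearMap.range lam)
    rw [LinearMap.finrank_range_of_inj hinj] at h1
    have h2 : Module.finrank ℤ (Module.Dual ℤ V) = Module.finrank ℤ V :=
      by
      classical
      exact (Module.Free.chooseBasis ℤ V).toDualEquiv.finrank_eq.symm
    have h3 : Module.finrank ℤ (Module.Dual ℤ V ⧸ LinearMap.range lam) = 0 := by omega
    rw [Module.finrank_eq_zero_iff] at h3
    intro x
    obtain ⟨s, hs, h⟩ := h3 (Submodule.Quotient.mk x)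
    rw [← Submodule.Quotient.mk_smul, Submodule.Quotient.mk_eq_zero] at h
    obtain ⟨z, hz⟩ := h
    exact ⟨s, hs, z, hz.symm⟩
  refine ⟨part1, ?_⟩
  have ev : ∀ (x : Module.Dual ℤ V) (s : ℤ) (z : V), s • x = lam z →
      ∀ w, (s : ℚ) * (x w : ℚ) = (lam z w : ℚ) := by
    intro x s z h w
    rw [← h]
    simp
  have sym : ∀ (x y : Module.Dual ℤ V) (s t : ℤ) (z w : V), s ≠ 0 → t ≠ 0 →
      s • x = lam z → t • y = lam w →
      (1 / (s : ℚ)) * (y z : ℚ) = (1 / (t : ℚ)) * (x w : ℚ) := by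
    intro x y s t z w hs ht hx hy
    have e1 := ev x s z hx w
    have e2 := ev y t w hy z
    rw [hsymm] at e2
    have hs' : (s : ℚ) ≠ 0 := by exact_mod_cast hs
    have ht' : (t : ℚ) ≠ 0 := by exact_mod_cast ht
    field_simp
    linarith
  have intz : ∀ n : ℤ, (((n : ℚ)) : AddCircle (1 : ℚ)) = 0 := by
    intro n
    rw [AddCircle.coe_eq_zero_iff]
    exact ⟨n, by simp⟩
  choose S hS Z hZ using part1
  have wd : ∀ (x y x0 y0 : Module.Dual ℤ V) (s : ℤ) (z : V), s ≠ 0 → s • x = lam z →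
      (Submodule.Quotient.mk x : Module.Dual ℤ V ⧸ LinearMap.range lam)
        = Submodule.Quotient.mk x0 →
      (Submodule.Quotient.mk y : Module.Dual ℤ V ⧸ LinearMap.range lam)
        = Submodule.Quotient.mk y0 →
      (((1 / (S x0 : ℚ)) * (y0 (Z x0) : ℚ) : ℚ) : AddCircle (1 : ℚ)) =
        (((1 / (s : ℚ)) * (y z : ℚ) : ℚ) : AddCircle (1 : ℚ)) := by
    intro x y x0 y0 s z hs hx hxx hyy
    rw [Submodule.Quotient.eq] at hxx hyy
    obtain ⟨u, hu⟩ := hxx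
    obtain ⟨v, hv⟩ := hyy
    have a1 := sym x y s (S y) z (Z y) hs (hS y) hx (hZ y)
    have a2 := sym x0 y (S x0) (S y) (Z x0) (Z y) (hS x0) (hS y) (hZ x0) (hZ y)
    have b1 : (x (Z y) : ℚ) = x0 (Z y) + lam u (Z y) := by
      rw [hu]; simp
    have b2 : (y (Z x0) : ℚ) = y0 (Z x0) + lam v (Z x0) := by
      rw [hv]; simp
    have c1 := ev y (S y) (Z y) (hZ y) u
    have c2 := ev x0 (S x0) (Z x0) (hZ x0) v
    rw [hsymm] at c1 c2
    have h1 : (S y : ℚ) ≠ 0 := by exact_mod_cast hS y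
    have h2 : (S x0 : ℚ) ≠ 0 := by exact_mod_cast hS x0
    have key : (1 / (s : ℚ)) * (y z : ℚ)
        = (1 / (S x0 : ℚ)) * (y0 (Z x0) : ℚ) + ((y u + x0 v : ℤ) : ℚ) := by
      rw [a1, b1, ← c1, mul_add, ← a2, b2, ← c2]
      push_cast
      field_simp
      ring
    rw [key, AddCircle.coe_add, intz, add_zero]
  obtain ⟨b, spec⟩ : ∃ b : (Module.Dual ℤ V ⧸ LinearMap.range lam) →
        (Module.Dual ℤ V ⧸ LinearMap.range lam) → AddCircle (1 : ℚ),
      ∀ (x y : Module.Dual ℤ V) (s : ℤ) (z : V), s ≠ 0 → s • x = lam z →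
        b (Submodule.Quotient.mk x) (Submodule.Quotient.mk y) =
          (((1 / (s : ℚ)) * (y z : ℚ) : ℚ) : AddCircle (1 : ℚ)) := by
    refine ⟨fun ξ η => (((1 / (S (Quotient.out ξ) : ℚ)) *
      ((Quotient.out η) (Z (Quotient.out ξ)) : ℚ) : ℚ) : AddCircle (1 : ℚ)), ?_⟩
    intro x y s z hs hx
    exact wd x y _ _ s z hs hx (Quotient.out_eq _).symm (Quotient.out_eq _).symm
  refine ⟨b, spec, ?_⟩
  have hsy : ∀ ξ η, b ξ η = b η ξ := by
    intro ξ η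
    obtain ⟨x, rfl⟩ := Submodule.Quotient.mk_surjective _ ξ
    obtain ⟨y, rfl⟩ := Submodule.Quotient.mk_surjective _ η
    rw [spec x y _ _ (hS x) (hZ x), spec y x _ _ (hS y) (hZ y),
      sym x y _ _ _ _ (hS x) (hS y) (hZ x) (hZ y)]
  have hadd : ∀ ξ η₁ η₂, b ξ (η₁ + η₂) = b ξ η₁ + b ξ η₂ := by
    intro ξ η₁ η₂
    obtain ⟨x, rfl⟩ := Submodule.Quotient.mk_surjective _ ξ
    obtain ⟨y, rfl⟩ := Submodule.Quotient.mk_surjective _ η₁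
    obtain ⟨y', rfl⟩ := Submodule.Quotient.mk_surjective _ η₂
    rw [← Submodule.Quotient.mk_add, spec x _ _ _ (hS x) (hZ x), spec x _ _ _ (hS x) (hZ x),
      spec x _ _ _ (hS x) (hZ x), ← AddCircle.coe_add, LinearMap.add_apply, Int.cast_add, mul_add]
  refine ⟨hsy, hadd, ?_⟩
  intro ξ₁ ξ₂ η
  rw [hsy, hadd, hsy η, hsy η]
end

section
/- Let Q be an n×n integer matrix such that A = Q + Q^T is invertible over ℚ, with rational inverse A^{-1}. Then the map (x,y) ↦ x^T A^{-1} y mod ℤ descends to a well-defined symmetric bilinear form ∂λ : (ℤ^n/Aℤ^n) × (ℤ^n/Aℤ^n) → ℚ/ℤ, the map x ↦ x^T A^{-1} Q A^{-1} x mod ℤ descends to a well-defined map ∂θ : ℤ^n/Aℤ^n → ℚ/ℤ, and these satisfy ∂θ(r·ξ) = r²·∂θ(ξ) for all r ∈ ℤ and ∂θ(ξ+η) − ∂θ(ξ) − ∂θ(η) = ∂λ(ξ,η) for all ξ, η ∈ ℤ^n/Aℤ^n; that is, (ℤ^n/Aℤ^n, ∂λ, ∂θ) is a split quadratic linking form over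 ℤ. -/
open Matrix

noncomputable section

/-- The symmetrisation `A = Q + Qᵀ`. -/
def symmMat {n : ℕ} (Q : Matrix (Fin n) (Fin n) ℤ) : Matrix (Fin n) (Fin n) ℤ := Q + Qᵀ

/-- `A = Q + Qᵀ` viewed as a rational matrix. -/
def symmQ {n : ℕ} (Q : Matrix (Fin n) (Fin n) ℤ) : Matrix (Fin n) (Fin n) ℚ :=
  (symmMat Q).map (Int.cast)

/-- The quotient `ℤⁿ/Aℤⁿ` for `A = Q + Qᵀ`. -/
abbrev CokerOf {n : ℕ} (Q : Matrix (Fin n) (Fin n) ℤ) :=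
  (Fin n → ℤ) ⧸ LinearMap.range ((symmMat Q).mulVecLin)

def mkOf {n : ℕ} (Q : Matrix (Fin n) (Fin n) ℤ) (x : Fin n → ℤ) : CokerOf Q :=
  Submodule.Quotient.mk x

def rat {n : ℕ} (x : Fin n → ℤ) : Fin n → ℚ := fun i => (x i : ℚ)

def bB {n : ℕ} (Q : Matrix (Fin n) (Fin n) ℤ) (x y : Fin n → ℤ) : ℚ :=
  rat x ⬝ᵥ ((symmQ Q)⁻¹ *ᵥ rat y)

def tT {n : ℕ} (Q : Matrix (Fin n) (Fin n) ℤ) (x : Fin n → ℤ) : ℚ :=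
  rat x ⬝ᵥ (((symmQ Q)⁻¹ * Q.map (Int.cast) * (symmQ Q)⁻¹) *ᵥ rat x)

lemma rat_add {n : ℕ} (x y : Fin n → ℤ) : rat (x + y) = rat x + rat y := by
  ext i; simp [rat]

lemma rat_smul {n : ℕ} (r : ℤ) (x : Fin n → ℤ) : rat (r • x) = (r : ℚ) • rat x := by
  ext i; simp [rat]

lemma rat_mulVec {n : ℕ} (M : Matrix (Fin n) (Fin n) ℤ) (x : Fin n → ℤ) :
    rat (M *ᵥ x) = (M.map (Int.cast) : Matrix (Fin n) (Fin n) ℚ) *ᵥ rat x := by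
  ext i; simp [rat, mulVec, dotProduct]

lemma rat_dot {n : ℕ} (x y : Fin n → ℤ) : rat x ⬝ᵥ rat y = ((x ⬝ᵥ y : ℤ) : ℚ) := by
  simp [rat, dotProduct]

lemma symmQ_eq {n : ℕ} (Q : Matrix (Fin n) (Fin n) ℤ) :
    symmQ Q = (Q.map (Int.cast) : Matrix (Fin n) (Fin n) ℚ) + (Q.map (Int.cast))ᵀ := by
  ext i j; simp [symmQ, symmMat]

lemma symmQ_transpose {n : ℕ} (Q : Matrix (Fin n) (Fin n) ℤ) : (symmQ Q)ᵀ = symmQ Q := by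
  rw [symmQ_eq, transpose_add, transpose_transpose, add_comm]

lemma symmQ_inv_transpose {n : ℕ} (Q : Matrix (Fin n) (Fin n) ℤ) :
    ((symmQ Q)⁻¹)ᵀ = (symmQ Q)⁻¹ := by
  rw [transpose_nonsing_inv, symmQ_transpose]

lemma dot_transpose {n : ℕ} (M : Matrix (Fin n) (Fin n) ℚ) (x y : Fin n → ℚ) :
    x ⬝ᵥ (M *ᵥ y) = y ⬝ᵥ (Mᵀ *ᵥ x) := by
  rw [dotProduct_mulVec, dotProduct_comm, mulVec_transpose]

lemma bB_symm {n : ℕ} (Q : Matrix (Fin n) (Fin n) ℤ) (x y : Fin n → ℤ) :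
    bB Q x y = bB Q y x := by
  unfold bB
  rw [dot_transpose, symmQ_inv_transpose]

lemma bB_add_right {n : ℕ} (Q : Matrix (Fin n) (Fin n) ℤ) (x y z : Fin n → ℤ) :
    bB Q x (y + z) = bB Q x y + bB Q x z := by
  simp [bB, rat_add, mulVec_add, dotProduct_add]

lemma bB_add_left {n : ℕ} (Q : Matrix (Fin n) (Fin n) ℤ) (x y z : Fin n → ℤ) :
    bB Q (x + y) z = bB Q x z + bB Q y z := by
  simp [bB, rat_add, add_dotProduct]

lemma tT_smul {n : ℕ} (Q : Matrix (Fin n) (Fin n) ℤ) (r : ℤ) (x : Fin n → ℤ) :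
    tT Q (r • x) = (r : ℚ) ^ 2 * tT Q x := by
  simp only [tT, rat_smul, mulVec_smul, dotProduct_smul, smul_dotProduct, smul_eq_mul]
  ring

lemma tT_add {n : ℕ} (Q : Matrix (Fin n) (Fin n) ℤ) (hA : (symmQ Q).det ≠ 0)
    (x y : Fin n → ℤ) : tT Q (x + y) = tT Q x + tT Q y + bB Q x y := by
  have key : (symmQ Q)⁻¹ = (symmQ Q)⁻¹ * Q.map (Int.cast) * (symmQ Q)⁻¹
      + ((symmQ Q)⁻¹ * Q.map (Int.cast) * (symmQ Q)⁻¹)ᵀ := by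
    rw [transpose_mul, transpose_mul, symmQ_inv_transpose, ← Matrix.mul_assoc, ← Matrix.add_mul,
      ← Matrix.mul_add, ← symmQ_eq, Matrix.nonsing_inv_mul _ (isUnit_iff_ne_zero.mpr hA),
      Matrix.one_mul]
  have hb : bB Q x y =
      rat x ⬝ᵥ (((symmQ Q)⁻¹ * Q.map (Int.cast) * (symmQ Q)⁻¹) *ᵥ rat y) +
      rat y ⬝ᵥ (((symmQ Q)⁻¹ * Q.map (Int.cast) * (symmQ Q)⁻¹) *ᵥ rat x) := by
    rw [dot_transpose _ (rat y) (rat x), ← dotProduct_add, ← add_mulVec, ← key]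
    rfl
  rw [hb]
  simp only [tT, rat_add, mulVec_add, dotProduct_add, add_dotProduct]
  ring

lemma inv_rat {n : ℕ} (Q : Matrix (Fin n) (Fin n) ℤ) (hA : (symmQ Q).det ≠ 0)
    (z : Fin n → ℤ) : (symmQ Q)⁻¹ *ᵥ rat (symmMat Q *ᵥ z) = rat z := by
  rw [rat_mulVec]
  change (symmQ Q)⁻¹ *ᵥ (symmQ Q *ᵥ rat z) = rat z
  rw [mulVec_mulVec, Matrix.nonsing_inv_mul _ (isUnit_iff_ne_zero.mpr hA), one_mulVec]

lemma bB_int {n : ℕ} (Q : Matrix (Fin n) (Fin n) ℤ) (hA : (symmQ Q).det ≠ 0)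
    (x z : Fin n → ℤ) : bB Q x (symmMat Q *ᵥ z) = ((x ⬝ᵥ z : ℤ) : ℚ) := by
  rw [bB, inv_rat Q hA, rat_dot]

lemma tT_int {n : ℕ} (Q : Matrix (Fin n) (Fin n) ℤ) (hA : (symmQ Q).det ≠ 0)
    (z : Fin n → ℤ) : tT Q (symmMat Q *ᵥ z) = ((z ⬝ᵥ (Q *ᵥ z) : ℤ) : ℚ) := by
  rw [tT, ← mulVec_mulVec, inv_rat Q hA, ← mulVec_mulVec, dot_transpose, symmQ_inv_transpose,
    inv_rat Q hA, ← rat_mulVec, dotProduct_comm, rat_dot]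

lemma coe_int_zero (k : ℤ) : (((k : ℤ) : ℚ) : AddCircle (1 : ℚ)) = 0 := by
  rw [AddCircle.coe_eq_zero_iff]
  exact ⟨k, by simp⟩

lemma out_mk {n : ℕ} (Q : Matrix (Fin n) (Fin n) ℤ) (x : Fin n → ℤ) :
    ∃ z, Quotient.out (mkOf Q x) = x + symmMat Q *ᵥ z := by
  have h : mkOf Q (Quotient.out (mkOf Q x)) = mkOf Q x := Quotient.out_eq _
  obtain ⟨z, hz⟩ := (Submodule.Quotient.eq _).mp h
  refine ⟨z, ?_⟩
  rw [mulVecLin_apply] at hz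
  rw [hz]; abel

lemma finite_coker {n : ℕ} (Q : Matrix (Fin n) (Fin n) ℤ) (hA : (symmQ Q).det ≠ 0) :
    Finite (CokerOf Q) := by
  have hd : (symmMat Q).det ≠ 0 := by
    intro h
    apply hA
    have := (Int.castRingHom ℚ).map_det (symmMat Q)
    rw [h] at this
    simpa [symmQ] using this.symm
  apply Module.finite_of_fg_torsion
  intro ξ
  obtain ⟨x, rfl⟩ := Submodule.Quotient.mk_surjective _ ξ
  refine ⟨⟨(symmMat Q).det, mem_nonZeroDivisors_of_ne_zero hd⟩, ?_⟩
  change (symmMat Q).det • (Submodule.Quotient.mk x : CokerOf Q) = 0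
  rw [← Submodule.Quotient.mk_smul, Submodule.Quotient.mk_eq_zero]
  refine ⟨(symmMat Q).adjugate *ᵥ x, ?_⟩
  rw [mulVecLin_apply, mulVec_mulVec, mul_adjugate, smul_mulVec, one_mulVec]

/-- Let Q be an n×n integer matrix with A = Q + Qᵀ invertible over ℚ.  Then
(x,y) ↦ xᵀA⁻¹y mod ℤ descends to a well-defined symmetric bilinear form
∂λ : (ℤⁿ/Aℤⁿ) × (ℤⁿ/Aℤⁿ) → ℚ/ℤ, x ↦ xᵀA⁻¹QA⁻¹x mod ℤ descends to a well-defined map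
∂θ : ℤⁿ/Aℤⁿ → ℚ/ℤ, and (ℤⁿ/Aℤⁿ, ∂λ, ∂θ) is a split quadratic linking form over ℤ:
the quotient is finite, ∂θ(r·ξ) = r²·∂θ(ξ) and ∂θ(ξ+η) − ∂θ(ξ) − ∂θ(η) = ∂λ(ξ,η). -/
theorem boundary_split_quadratic_linking_form
    (n : ℕ) (Q : Matrix (Fin n) (Fin n) ℤ) (hA : (symmQ Q).det ≠ 0) :
    Finite (CokerOf Q) ∧
    ∃ b : CokerOf Q → CokerOf Q → AddCircle (1 : ℚ), ∃ ν : CokerOf Q → AddCircle (1 : ℚ),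
      (∀ x y : Fin n → ℤ, b (mkOf Q x) (mkOf Q y) =
        ((rat x ⬝ᵥ ((symmQ Q)⁻¹ *ᵥ rat y) : ℚ) : AddCircle (1 : ℚ))) ∧
      (∀ x : Fin n → ℤ, ν (mkOf Q x) =
        ((rat x ⬝ᵥ (((symmQ Q)⁻¹ * Q.map (Int.cast) * (symmQ Q)⁻¹) *ᵥ rat x) : ℚ) :
          AddCircle (1 : ℚ))) ∧
      (∀ ξ η, b ξ η = b η ξ) ∧
      (∀ ξ η₁ η₂, b ξ (η₁ + η₂) = b ξ η₁ + b ξ η₂) ∧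
      (∀ ξ₁ ξ₂ η, b (ξ₁ + ξ₂) η = b ξ₁ η + b ξ₂ η) ∧
      (∀ (r : ℤ) (ξ : CokerOf Q), ν (r • ξ) = (r ^ 2) • ν ξ) ∧
      (∀ ξ η, ν (ξ + η) - ν ξ - ν η = b ξ η) := by
  refine ⟨finite_coker Q hA, fun ξ η => ((bB Q ξ.out η.out : ℚ) : AddCircle (1 : ℚ)),
    fun ξ => ((tT Q ξ.out : ℚ) : AddCircle (1 : ℚ)), ?_⟩
  have hb : ∀ x y, ((bB Q (mkOf Q x).out (mkOf Q y).out : ℚ) : AddCircle (1 : ℚ)) = bB Q x y := by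
    intro x y
    obtain ⟨z, hz⟩ := out_mk Q x
    obtain ⟨w, hw⟩ := out_mk Q y
    rw [hz, hw, bB_add_right, bB_int Q hA, bB_symm, bB_add_right, bB_int Q hA, bB_symm]
    simp only [AddCircle.coe_add, coe_int_zero, add_zero]
  have hn : ∀ x, ((tT Q (mkOf Q x).out : ℚ) : AddCircle (1 : ℚ)) = tT Q x := by
    intro x
    obtain ⟨z, hz⟩ := out_mk Q x
    rw [hz, tT_add Q hA, tT_int Q hA, bB_int Q hA]
    simp only [AddCircle.coe_add, coe_int_zero, add_zero]
  have hs : ∀ ξ : CokerOf Q, ∃ x, mkOf Q x = ξ := Submodule.Quotient.mk_surjective _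
  have hadd : ∀ x y, mkOf Q x + mkOf Q y = mkOf Q (x + y) := fun _ _ => rfl
  have hsm : ∀ (r : ℤ) x, r • mkOf Q x = mkOf Q (r • x) := fun _ _ => rfl
  refine ⟨hb, hn, ?_, ?_, ?_, ?_, ?_⟩
  · intro ξ η
    simp only [bB_symm Q ξ.out]
  · intro ξ η₁ η₂
    obtain ⟨x, rfl⟩ := hs ξ
    obtain ⟨y, rfl⟩ := hs η₁
    obtain ⟨z, rfl⟩ := hs η₂
    simp only [hadd, hb, bB_add_right, AddCircle.coe_add]
  · intro ξ η₁ η₂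
    obtain ⟨x, rfl⟩ := hs ξ
    obtain ⟨y, rfl⟩ := hs η₁
    obtain ⟨z, rfl⟩ := hs η₂
    simp only [hadd, hb, bB_add_left, AddCircle.coe_add]
  · intro r ξ
    obtain ⟨x, rfl⟩ := hs ξ
    simp only [hsm, hn, tT_smul]
    rw [← AddCircle.coe_zsmul, zsmul_eq_mul]
    push_cast
    rfl
  · intro ξ η
    obtain ⟨x, rfl⟩ := hs ξ
    obtain ⟨y, rfl⟩ := hs η
    simp only [hadd, hn, hb, tT_add Q hA, AddCircle.coe_add]
    abel
end
end

section
/- For h = 2 there exists a group isomorphism u : ℤ/4 ⊕ ℤ/4 → ℤ²/A₂ℤ² such that for all a, b ∈ ℤ/4 ⊕ ℤ/4 with integer lifts x = (x₁,x₂) and y = (y₁,y₂): ∂λ(u(a),u(b)) = (x₁y₁ + x₂y₂)/4 mod ℤ and ∂θ(u(a)) = (x₁² + x₂²)/8 mod ℤ. -/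
open Matrix

noncomputable section

/-- The matrix `Q_h`: first row all `4`; in rows `2,…,h` diagonal and
above-diagonal entries are `2`, below-diagonal entries are `0`. -/
def Qmat (h : ℕ) : Matrix (Fin h) (Fin h) ℤ :=
  Matrix.of fun i j => if (i : ℕ) = 0 then 4 else if i ≤ j then 2 else 0

/-- `A_h = Q_h + Q_hᵀ`. -/
def Amat (h : ℕ) : Matrix (Fin h) (Fin h) ℤ := Qmat h + (Qmat h)ᵀ

/-- `A_h` viewed as a rational matrix. -/
def AmatQ (h : ℕ) : Matrix (Fin h) (Fin h) ℚ := (Amat h).map (Int.cast)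

/-- `Q_h` viewed as a rational matrix. -/
def QmatQ (h : ℕ) : Matrix (Fin h) (Fin h) ℚ := (Qmat h).map (Int.cast)

/-- The cokernel `ℤ^h / A_h ℤ^h`. -/
abbrev Coker (h : ℕ) := (Fin h → ℤ) ⧸ LinearMap.range ((Amat h).mulVecLin)

/-- The quotient map `ℤ^h → ℤ^h / A_h ℤ^h`. -/
def ckMk {h : ℕ} (x : Fin h → ℤ) : Coker h := Submodule.Quotient.mk x

def ratVec {h : ℕ} (x : Fin h → ℤ) : Fin h → ℚ := fun i => (x i : ℚ)

/-- The boundary linking form `∂λ` computed on representatives: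
`x ᵀ A_h⁻¹ y mod ℤ`, valued in `ℚ/ℤ`. -/
def linkR (h : ℕ) (x y : Fin h → ℤ) : AddCircle (1 : ℚ) :=
  ((ratVec x ⬝ᵥ ((AmatQ h)⁻¹ *ᵥ ratVec y) : ℚ) : AddCircle (1 : ℚ))

/-- The boundary quadratic form `∂θ` computed on representatives:
`xᵀ A_h⁻¹ Q_h A_h⁻¹ x mod ℤ`, valued in `ℚ/ℤ`. -/
def quadR (h : ℕ) (x : Fin h → ℤ) : AddCircle (1 : ℚ) :=
  ((ratVec x ⬝ᵥ (((AmatQ h)⁻¹ * QmatQ h * (AmatQ h)⁻¹) *ᵥ ratVec x) : ℚ) : AddCircle (1 : ℚ))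

/-- The map `(x₁, x₂) ↦ (x₁ - x₂, x₂)` modulo `4`. -/
def redMap : (Fin 2 → ℤ) →ₗ[ℤ] (ZMod 4 × ZMod 4) :=
  AddMonoidHom.toIntLinearMap
    { toFun := fun x => (((x 0 - x 1 : ℤ) : ZMod 4), ((x 1 : ℤ) : ZMod 4))
      map_zero' := by simp
      map_add' := by
        intro x y
        ext
        · simp; ring
        · simp }

lemma redMap_apply (x : Fin 2 → ℤ) :
    redMap x = (((x 0 - x 1 : ℤ) : ZMod 4), ((x 1 : ℤ) : ZMod 4)) := rfl

lemma redMap_surj : Function.Surjective redMap := by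
  rintro ⟨a, b⟩
  obtain ⟨m, rfl⟩ := ZMod.intCast_surjective a
  obtain ⟨n, rfl⟩ := ZMod.intCast_surjective b
  exact ⟨![m + n, n], by simp [redMap_apply]⟩

lemma Amat_two : Amat 2 = !![8, 4; 4, 4] := by
  ext i j
  fin_cases i <;> fin_cases j <;> simp [Amat, Qmat]

lemma QmatQ_two : QmatQ 2 = !![4, 4; 0, 2] := by
  ext i j
  fin_cases i <;> fin_cases j <;> simp [QmatQ, Qmat]

lemma AmatQ_two_inv : (AmatQ 2)⁻¹ = !![1/4, -1/4; -1/4, 1/2] := by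
  apply Matrix.inv_eq_right_inv
  rw [AmatQ, Amat_two]
  ext i j
  fin_cases i <;> fin_cases j <;> norm_num [Matrix.mul_apply, Fin.sum_univ_two]

lemma ker_redMap : LinearMap.range ((Amat 2).mulVecLin) = LinearMap.ker redMap := by
  ext x
  rw [LinearMap.mem_range, LinearMap.mem_ker, redMap_apply, Prod.mk_eq_zero,
    ZMod.intCast_zmod_eq_zero_iff_dvd, ZMod.intCast_zmod_eq_zero_iff_dvd]
  simp only [Amat_two, Matrix.mulVecLin_apply]
  constructor
  · rintro ⟨y, rfl⟩
    simp [Matrix.mulVec, dotProduct, Fin.sum_univ_two]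
    omega
  · rintro ⟨⟨a, ha⟩, ⟨b, hb⟩⟩
    refine ⟨![a, b - a], ?_⟩
    ext i
    fin_cases i <;> simp [Matrix.mulVec, dotProduct, Fin.sum_univ_two] <;> push_cast at ha hb <;> omega

/-- The isomorphism of the cokernel with `ℤ/4 ⊕ ℤ/4`. -/
def cokerEquiv : Coker 2 ≃ₗ[ℤ] (ZMod 4 × ZMod 4) :=
  (Submodule.quotEquivOfEq _ _ ker_redMap).trans (redMap.quotKerEquivOfSurjective redMap_surj)

lemma cokerEquiv_mk (x : Fin 2 → ℤ) : cokerEquiv (ckMk x) = redMap x := rfl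

lemma circle_eq {a b : ℚ} (n : ℤ) (h : a = b + n) :
    (a : AddCircle (1 : ℚ)) = (b : AddCircle (1 : ℚ)) := by
  subst h
  rw [AddCircle.coe_add]
  have : ((n : ℚ) : AddCircle (1 : ℚ)) = 0 := by
    rw [AddCircle.coe_eq_zero_iff]
    exact ⟨n, by simp⟩
  rw [this, add_zero]

lemma lift_eq {x x' : Fin 2 → ℤ}
    (h : ckMk x' = cokerEquiv.symm ((x 0 : ZMod 4), (x 1 : ZMod 4))) :
    ∃ a b : ℤ, x' 0 = x 0 + x 1 + 4 * (a + b) ∧ x' 1 = x 1 + 4 * b := by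
  have h2 : redMap x' = ((x 0 : ZMod 4), (x 1 : ZMod 4)) := by
    rw [← cokerEquiv_mk, h, LinearEquiv.apply_symm_apply]
  rw [redMap_apply, Prod.mk.injEq, ZMod.intCast_eq_intCast_iff_dvd_sub,
    ZMod.intCast_eq_intCast_iff_dvd_sub] at h2
  obtain ⟨⟨a, ha⟩, ⟨b, hb⟩⟩ := h2
  push_cast at ha hb
  exact ⟨-a, -b, by omega, by omega⟩

/-- For h = 2 there is a group isomorphism u : ℤ/4 ⊕ ℤ/4 → ℤ²/A₂ℤ² identifying the
boundary linking form with ((x₁y₁ + x₂y₂)/4 mod ℤ) and the boundary quadratic form with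
((x₁² + x₂²)/8 mod ℤ), computed from integer lifts x, y of the arguments. -/
theorem boundary_forms_h2 :
    ∃ u : (ZMod 4 × ZMod 4) ≃+ Coker 2,
      ∀ x y x' y' : Fin 2 → ℤ,
        ckMk x' = u ((x 0 : ZMod 4), (x 1 : ZMod 4)) →
        ckMk y' = u ((y 0 : ZMod 4), (y 1 : ZMod 4)) →
        linkR 2 x' y' =
          ((((x 0 : ℚ) * (y 0 : ℚ) + (x 1 : ℚ) * (y 1 : ℚ)) / 4 : ℚ) : AddCircle (1 : ℚ)) ∧
        quadR 2 x' =
          ((((x 0 : ℚ) ^ 2 + (x 1 : ℚ) ^ 2) / 8 : ℚ) : AddCircle (1 : ℚ)) := by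
  refine ⟨cokerEquiv.symm.toAddEquiv, ?_⟩
  intro x y x' y' hx hy
  obtain ⟨a, b, h0, h1⟩ := lift_eq hx
  obtain ⟨c, d, k0, k1⟩ := lift_eq hy
  constructor
  · apply circle_eq (x 0 * c + a * y 0 + 4 * a * c + x 1 * d + b * y 1 + 4 * b * d)
    simp [AmatQ_two_inv, ratVec, Matrix.mulVec, dotProduct, Fin.sum_univ_two, h0, h1, k0, k1]
    ring
  · apply circle_eq (x 0 * a + 2 * a ^ 2 + x 1 * b + 2 * b ^ 2)
    simp [AmatQ_two_inv, QmatQ_two, ratVec, Matrix.mulVec, dotProduct, Fin.sum_univ_two, h0, h1]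
    ring
end
end

section
/- For h = 3 there exists a group isomorphism u : ℤ/8 ⊕ ℤ/2 ⊕ ℤ/2 → ℤ³/A₃ℤ³ such that for all a, b with integer lifts x = (x₁,x₂,x₃) and y = (y₁,y₂,y₃): ∂λ(u(a),u(b)) = 3x₁y₁/8 + (x₁y₂ + x₂y₁ + x₁y₃ + x₃y₁ + x₂y₃ + x₃y₂)/2 mod ℤ and ∂θ(u(a)) = 3x₁²/16 + (x₂² + x₃² + x₁x₂ + x₁x₃ + x₂x₃)/2 mod ℤ. -/
open Matrix

noncomputable section

theorem Qmat_three : Qmat 3 = !![4, 4, 4; 0, 2, 2; 0, 0, 2] := by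
  ext i j
  fin_cases i <;> fin_cases j <;> rfl

theorem Amat_three : Amat 3 = !![8, 4, 4; 4, 4, 2; 4, 2, 4] := by
  rw [Amat, Qmat_three]
  ext i j
  fin_cases i <;> fin_cases j <;> rfl

/-- The explicit inverse of `A_3`. -/
theorem AmatQ_three_inv : (AmatQ 3)⁻¹ =
    !![3/8, -1/4, -1/4; -1/4, 1/2, 0; -1/4, 0, (1/2 : ℚ)] := by
  apply Matrix.inv_eq_right_inv
  rw [AmatQ, Amat_three]
  ext i j
  fin_cases i <;> fin_cases j <;>
    simp [Matrix.mul_apply, Fin.sum_univ_three] <;> norm_num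

theorem QmatQ_three : QmatQ 3 = !![4, 4, 4; 0, 2, 2; 0, 0, (2 : ℚ)] := by
  rw [QmatQ, Qmat_three]
  ext i j
  fin_cases i <;> fin_cases j <;> simp

/-- The homomorphism `(p,q,r) ↦ (p - 2q - 2r, r, q)`. -/
def phi3 : (Fin 3 → ℤ) →+ (ZMod 8 × ZMod 2 × ZMod 2) where
  toFun v := (((v 0 - 2 * v 1 - 2 * v 2 : ℤ) : ZMod 8), ((v 2 : ℤ) : ZMod 2), ((v 1 : ℤ) : ZMod 2))
  map_zero' := by simp
  map_add' v w := by
    ext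
    · simp; ring
    · simp
    · simp

theorem phi3_eq_iff (v x : Fin 3 → ℤ) :
    phi3 v = ((x 0 : ZMod 8), (x 1 : ZMod 2), (x 2 : ZMod 2)) ↔
      (∃ k, v 0 - 2 * v 1 - 2 * v 2 = x 0 + 8 * k) ∧ (∃ m, v 2 = x 1 + 2 * m) ∧
        (∃ n, v 1 = x 2 + 2 * n) := by
  have key : ∀ (N : ℕ) (a b : ℤ), ((a : ZMod N) = (b : ZMod N)) ↔ ∃ k, a = b + N * k := by
    intro N a b
    rw [eq_comm, ZMod.intCast_eq_intCast_iff_dvd_sub]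
    constructor
    · rintro ⟨k, hk⟩
      exact ⟨k, by linarith⟩
    · rintro ⟨k, hk⟩
      exact ⟨k, by linarith⟩
  have h8 := key 8 (v 0 - 2 * v 1 - 2 * v 2) (x 0)
  have h2 := key 2 (v 2) (x 1)
  have h3 := key 2 (v 1) (x 2)
  change ((((v 0 - 2 * v 1 - 2 * v 2 : ℤ) : ZMod 8), ((v 2 : ℤ) : ZMod 2),
    ((v 1 : ℤ) : ZMod 2)) : ZMod 8 × ZMod 2 × ZMod 2) = _ ↔ _
  rw [Prod.mk.injEq, Prod.mk.injEq, h8, h2, h3]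
  rfl

theorem phi3_surj : Function.Surjective phi3 := by
  rintro ⟨a, b, c⟩
  obtain ⟨a, rfl⟩ := ZMod.intCast_surjective a
  obtain ⟨b, rfl⟩ := ZMod.intCast_surjective b
  obtain ⟨c, rfl⟩ := ZMod.intCast_surjective c
  refine ⟨![a + 2 * c + 2 * b, c, b], ?_⟩
  refine (phi3_eq_iff _ ![a, b, c]).2 ⟨⟨0, ?_⟩, ⟨0, ?_⟩, ⟨0, ?_⟩⟩ <;> simp <;> ring

theorem Amat_three_mulVec (w : Fin 3 → ℤ) : (Amat 3).mulVecLin w =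
    ![8 * w 0 + 4 * w 1 + 4 * w 2, 4 * w 0 + 4 * w 1 + 2 * w 2,
      4 * w 0 + 2 * w 1 + 4 * w 2] := by
  rw [Amat_three]
  ext i
  fin_cases i <;>
    simp [Matrix.mulVec, dotProduct, Fin.sum_univ_three]

theorem phi3_ker : (LinearMap.range ((Amat 3).mulVecLin)).toAddSubgroup = phi3.ker := by
  ext v
  have h0 : v ∈ phi3.ker ↔ phi3 v =
      ((((0 : Fin 3 → ℤ) 0 : ℤ) : ZMod 8), (((0 : Fin 3 → ℤ) 1 : ℤ) : ZMod 2),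
        (((0 : Fin 3 → ℤ) 2 : ℤ) : ZMod 2)) := by
    rw [AddMonoidHom.mem_ker]; simp [Prod.ext_iff]
  rw [h0, phi3_eq_iff, Submodule.mem_toAddSubgroup, LinearMap.mem_range]
  constructor
  · rintro ⟨w, rfl⟩
    rw [Amat_three_mulVec]
    refine ⟨⟨-w 0 - w 1 - w 2, ?_⟩, ⟨2 * w 0 + w 1 + 2 * w 2, ?_⟩,
      ⟨2 * w 0 + 2 * w 1 + w 2, ?_⟩⟩ <;> simp <;> ring
  · rintro ⟨⟨k, hk⟩, ⟨m, hm⟩, ⟨n, hn⟩⟩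
    simp only [Pi.zero_apply, zero_add] at hk hm hn
    refine ⟨![3 * k + m + n, -2 * k - m, -2 * k - n], ?_⟩
    rw [Amat_three_mulVec]
    ext i
    fin_cases i <;> simp <;> linarith

/-- The isomorphism `ℤ³/A₃ℤ³ ≃ ℤ/8 ⊕ ℤ/2 ⊕ ℤ/2`. -/
def equiv3 : Coker 3 ≃+ (ZMod 8 × ZMod 2 × ZMod 2) :=
  (QuotientAddGroup.quotientAddEquivOfEq phi3_ker).trans
    (QuotientAddGroup.quotientKerEquivOfSurjective phi3 phi3_surj)

theorem equiv3_mk (v : Fin 3 → ℤ) : equiv3 (ckMk v) = phi3 v := rfl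

theorem circle_eq_of_int (p q : ℚ) (n : ℤ) (h : p = q + n) :
    (p : AddCircle (1 : ℚ)) = (q : AddCircle (1 : ℚ)) := by
  rw [← sub_eq_zero, ← AddCircle.coe_sub, AddCircle.coe_eq_zero_iff]
  exact ⟨n, by rw [h]; simp⟩

/-- For h = 3 there is a group isomorphism u : ℤ/8 ⊕ ℤ/2 ⊕ ℤ/2 → ℤ³/A₃ℤ³ identifying the
boundary linking form with 3x₁y₁/8 + (x₁y₂+x₂y₁+x₁y₃+x₃y₁+x₂y₃+x₃y₂)/2 mod ℤ and the
boundary quadratic form with 3x₁²/16 + (x₂²+x₃²+x₁x₂+x₁x₃+x₂x₃)/2 mod ℤ,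
computed from integer lifts x, y of the arguments. -/
theorem boundary_forms_h3 :
    ∃ u : (ZMod 8 × ZMod 2 × ZMod 2) ≃+ Coker 3,
      ∀ x y x' y' : Fin 3 → ℤ,
        ckMk x' = u ((x 0 : ZMod 8), (x 1 : ZMod 2), (x 2 : ZMod 2)) →
        ckMk y' = u ((y 0 : ZMod 8), (y 1 : ZMod 2), (y 2 : ZMod 2)) →
        linkR 3 x' y' =
          ((3 * (x 0 : ℚ) * (y 0 : ℚ) / 8 +
            ((x 0 : ℚ) * (y 1 : ℚ) + (x 1 : ℚ) * (y 0 : ℚ) + (x 0 : ℚ) * (y 2 : ℚ) +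
              (x 2 : ℚ) * (y 0 : ℚ) + (x 1 : ℚ) * (y 2 : ℚ) + (x 2 : ℚ) * (y 1 : ℚ)) / 2 : ℚ) :
            AddCircle (1 : ℚ)) ∧
        quadR 3 x' =
          ((3 * (x 0 : ℚ) ^ 2 / 16 +
            ((x 1 : ℚ) ^ 2 + (x 2 : ℚ) ^ 2 + (x 0 : ℚ) * (x 1 : ℚ) + (x 0 : ℚ) * (x 2 : ℚ) +
              (x 1 : ℚ) * (x 2 : ℚ)) / 2 : ℚ) : AddCircle (1 : ℚ)) := by
  refine ⟨equiv3.symm, ?_⟩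
  intro x y v w hx hy
  rw [AddEquiv.eq_symm_apply, equiv3_mk, phi3_eq_iff] at hx hy
  obtain ⟨⟨k, hk⟩, ⟨m, hm⟩, ⟨n, hn⟩⟩ := hx
  obtain ⟨⟨k', hk'⟩, ⟨m', hm'⟩, ⟨n', hn'⟩⟩ := hy
  have e0 : v 0 = x 0 + 8 * k + 2 * (x 2 + 2 * n) + 2 * (x 1 + 2 * m) := by
    rw [← hm, ← hn]; linarith
  have f0 : w 0 = y 0 + 8 * k' + 2 * (y 2 + 2 * n') + 2 * (y 1 + 2 * m') := by
    rw [← hm', ← hn']; linarith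
  constructor
  · refine circle_eq_of_int _ _
      (3 * (x 0 * k' + y 0 * k) + 24 * k * k' + x 0 * (m' + n') + y 0 * (m + n)
        + 4 * k * (w 1 + w 2) + 4 * k' * (v 1 + v 2)
        + (x 2 * m' + n * y 1 + 2 * n * m') + (y 2 * m + n' * x 1 + 2 * n' * m)
        + v 1 * w 1 + v 2 * w 2) ?_
    rw [AmatQ_three_inv]
    simp [ratVec, Matrix.mulVec, dotProduct, Fin.sum_univ_three, e0, f0, hm, hn, hm', hn']
    ring
  · refine circle_eq_of_int _ _
      (3 * x 0 * k + 12 * k ^ 2 + x 0 * (m + n) + 4 * k * (v 1 + v 2)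
        + (x 2 * m + n * x 1 + 2 * n * m)
        + (2 * x 2 * n + 2 * n ^ 2) + (2 * x 1 * m + 2 * m ^ 2)) ?_
    rw [AmatQ_three_inv, QmatQ_three]
    simp [ratVec, Matrix.mulVec, dotProduct, Fin.sum_univ_three, Matrix.mul_apply, e0, hm, hn]
    ring
end
end

section
/- For h = 5, the group {P ∈ GL₅(ℤ) : P^T A₅ P = A₅} of isometries of the symmetric bilinear form represented by A₅ = Q₅ + Q₅^T is finite of order 3840. -/
open Matrix

noncomputable section

/-- The signed permutation matrix attached to signs and a permutation. -/
def sgnPerm (p : (Fin 5 → ℤˣ) × Equiv.Perm (Fin 5)) : Matrix (Fin 5) (Fin 5) ℤ :=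
  Matrix.of fun i j => if i = p.2 j then (p.1 j : ℤ) else 0

lemma sgnPerm_orth (p : (Fin 5 → ℤˣ) × Equiv.Perm (Fin 5)) :
    (sgnPerm p)ᵀ * sgnPerm p = 1 := by
  ext j k
  simp only [sgnPerm, Matrix.mul_apply, Matrix.transpose_apply, Matrix.of_apply, ite_mul, zero_mul,
    Finset.sum_ite_eq', Finset.sum_ite_eq, Finset.mem_univ, if_true]
  by_cases h : j = k
  · subst h
    simp [← Units.val_mul]
  · simp [h]

lemma sq_sum_one (v : Fin 5 → ℤ) (h : ∑ i, v i * v i = 1) :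
    ∃ i, IsUnit (v i) ∧ ∀ k, k ≠ i → v k = 0 := by
  have hex : ∃ i, v i ≠ 0 := by
    by_contra! hc
    simp [hc] at h
  obtain ⟨i, hi⟩ := hex
  rw [← Finset.add_sum_erase _ _ (Finset.mem_univ i)] at h
  have h1 : 0 < v i * v i := mul_self_pos.mpr hi
  have h2 : 0 ≤ ∑ x ∈ Finset.univ.erase i, v x * v x :=
    Finset.sum_nonneg fun x _ => mul_self_nonneg _
  have h3 : ∑ x ∈ Finset.univ.erase i, v x * v x = 0 := by omega
  have h4 : v i * v i = 1 := by omega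
  refine ⟨i, IsUnit.of_mul_eq_one _ h4, fun k hk => ?_⟩
  rw [Finset.sum_eq_zero_iff_of_nonneg (fun x _ => mul_self_nonneg _)] at h3
  exact mul_self_eq_zero.mp (h3 k (by simp [hk]))

lemma card_orth :
    Nat.card {N : Matrix (Fin 5) (Fin 5) ℤ // Nᵀ * N = 1} = 3840 := by
  have hb : Function.Bijective (fun p => (⟨sgnPerm p, sgnPerm_orth p⟩ :
      {N : Matrix (Fin 5) (Fin 5) ℤ // Nᵀ * N = 1})) := by
    constructor
    · rintro ⟨e, s⟩ ⟨f, t⟩ h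
      have h' : ∀ i j, sgnPerm (e, s) i j = sgnPerm (f, t) i j := fun i j =>
        congrFun (congrFun (congrArg Subtype.val h) i) j
      simp only [sgnPerm, Matrix.of_apply] at h'
      have hst : s = t := by
        ext1 j
        by_contra hc
        have := h' (s j) j
        simp [hc] at this
      subst hst
      have hef : e = f := by
        ext j
        simpa using h' (s j) j
      rw [hef]
    · rintro ⟨N, hN⟩
      have hcol : ∀ j, ∃ i, IsUnit (N i j) ∧ ∀ k, k ≠ i → N k j = 0 := by
        intro j
        apply sq_sum_one (fun i => N i j)
        have := congrFun (congrFun hN j) j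
        simpa [Matrix.mul_apply] using this
      choose s hs hz using hcol
      have hinj : Function.Injective s := by
        intro j k hjk
        by_contra hne
        have := congrFun (congrFun hN j) k
        rw [Matrix.mul_apply, Finset.sum_eq_single (s j), Matrix.one_apply_ne hne] at this
        · rcases mul_eq_zero.mp this with h | h
          · exact (hs j).ne_zero h
          · rw [hjk] at h
            exact (hs k).ne_zero h
        · intro b _ hb
          simp [hz j b hb]
        · simp
      refine ⟨(fun j => (hs j).unit, Equiv.ofBijective s (Finite.injective_iff_bijective.mp hinj)), ?_⟩
      apply Subtype.ext
      ext i j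
      simp only [sgnPerm, Matrix.of_apply, Equiv.ofBijective_apply, IsUnit.unit_spec]
      split_ifs with h
      · rw [h]
      · exact (hz j i h).symm
  rw [← Nat.card_eq_of_bijective _ hb, Nat.card_prod, Nat.card_perm, Nat.card_fun]
  simp [Nat.factorial]

/-- Embedding of the lattice into `ℤ⁵`, with image `D₅`. -/
def Mm : Matrix (Fin 5) (Fin 5) ℤ :=
  !![2,1,1,1,1;0,1,0,0,0;0,0,1,0,0;0,0,0,1,0;0,0,0,0,1]

/-- Twice the inverse of `Mm`. -/
def Km : Matrix (Fin 5) (Fin 5) ℤ :=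
  !![1,-1,-1,-1,-1;0,2,0,0,0;0,0,2,0,0;0,0,0,2,0;0,0,0,0,2]

lemma Amat_eq : Amat 5 = (2 : ℤ) • (Mmᵀ * Mm) := by
  ext i j
  fin_cases i <;> fin_cases j <;>
    simp [Amat, Qmat, Mm, Matrix.mul_apply, Fin.sum_univ_five]

lemma Mm_Km : Mm * Km = (2 : ℤ) • 1 := by
  unfold Mm Km; decide

lemma Km_Mm : Km * Mm = (2 : ℤ) • 1 := by
  unfold Mm Km; decide

lemma smul_cancel2 {X Y : Matrix (Fin 5) (Fin 5) ℤ} (h : (2 : ℤ) • X = (2 : ℤ) • Y) : X = Y :=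
  smul_right_injective _ (by norm_num : (2 : ℤ) ≠ 0) h

lemma Mm_cancel {X Y : Matrix (Fin 5) (Fin 5) ℤ} (h : Mm * X = Mm * Y) : X = Y := by
  apply smul_cancel2
  have := congrArg (Km * ·) h
  simpa only [← Matrix.mul_assoc, Km_Mm, Matrix.mul_smul, Matrix.smul_mul, Matrix.mul_one, Matrix.one_mul] using this

lemma Mm_cancel_right {X Y : Matrix (Fin 5) (Fin 5) ℤ} (h : X * Mm = Y * Mm) : X = Y := by
  apply smul_cancel2
  have := congrArg (· * Km) h
  simpa only [Matrix.mul_assoc, Mm_Km, Matrix.mul_smul, Matrix.smul_mul, Matrix.mul_one, Matrix.one_mul] using this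

lemma Mmt_cancel {X Y : Matrix (Fin 5) (Fin 5) ℤ} (h : Mmᵀ * X = Mmᵀ * Y) : X = Y := by
  apply Matrix.transpose_injective
  apply Mm_cancel_right
  have := congrArg Matrix.transpose h
  simpa [Matrix.transpose_mul] using this

lemma even_col (a b c d e : ℤ) (h : a*a+b*b+c*c+d*d+e*e = 4)
    (hb : 2 ∣ a + b) (hc : 2 ∣ a + c) (hd : 2 ∣ a + d) (he : 2 ∣ a + e) : 2 ∣ a := by
  by_contra ha
  have key : ∀ x : ℤ, ¬ 2 ∣ x → 1 ≤ x * x := by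
    intro x hx
    have h0 : x ≠ 0 := by rintro rfl; simp at hx
    have : 0 < x * x := mul_self_pos.mpr h0
    omega
  have := key a ha
  have := key b (by omega)
  have := key c (by omega)
  have := key d (by omega)
  have := key e (by omega)
  omega

lemma exists_N (P : Matrix (Fin 5) (Fin 5) ℤ) (hd : IsUnit P.det)
    (hP : Pᵀ * Amat 5 * P = Amat 5) : ∃ N, Nᵀ * N = 1 ∧ N * Mm = Mm * P := by
  have hP' : Pᵀ * (Mmᵀ * Mm) * P = Mmᵀ * Mm := by
    apply smul_cancel2
    rw [Amat_eq] at hP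
    simpa only [Matrix.mul_smul, Matrix.smul_mul, Matrix.mul_one, Matrix.one_mul] using hP
  set N' := Mm * P * Km with hN'
  have hM : N' * Mm = (2 : ℤ) • (Mm * P) := by
    rw [hN', Matrix.mul_assoc, Km_Mm]; simp only [Matrix.mul_smul, Matrix.smul_mul, Matrix.mul_one, Matrix.one_mul]
  have horth : N'ᵀ * N' = (4 : ℤ) • 1 := by
    have h1 : N'ᵀ * N' = Kmᵀ * (Pᵀ * (Mmᵀ * Mm) * P) * Km := by
      simp only [hN', Matrix.transpose_mul, Matrix.mul_assoc]
    have h2 : Kmᵀ * (Mmᵀ * Mm) * Km = (Mm * Km)ᵀ * (Mm * Km) := by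
      simp only [Matrix.transpose_mul, Matrix.mul_assoc]
    rw [h1, hP', h2, Mm_Km]
    simp only [Matrix.transpose_smul, Matrix.transpose_one, smul_smul, Matrix.mul_smul, Matrix.smul_mul, Matrix.mul_one, Matrix.one_mul]
    norm_num
  obtain ⟨R, hR⟩ : ∃ R : Matrix (Fin 5) (Fin 5) ℤ, R * Pᵀ = 1 :=
    ⟨(Pᵀ)⁻¹, Matrix.nonsing_inv_mul _ (by rwa [Matrix.det_transpose])⟩
  have hpar : Mmᵀ * N' = (2 : ℤ) • (R * Mmᵀ) := by
    have h1 : Mmᵀ * N' = R * Pᵀ * (Mmᵀ * N') := by rw [hR, Matrix.one_mul]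
    have h2 : R * Pᵀ * (Mmᵀ * N') = R * (Pᵀ * (Mmᵀ * Mm) * P) * Km := by
      simp only [hN', Matrix.mul_assoc]
    rw [h1, h2, hP', Matrix.mul_assoc, Matrix.mul_assoc, Mm_Km]
    simp only [Matrix.mul_smul, Matrix.smul_mul, Matrix.mul_one, Matrix.one_mul]
  have hp : ∀ i j, 2 ∣ (Mmᵀ * N') i j := fun i j => by
    rw [hpar]; exact ⟨_, by simp; rfl⟩
  have hev0 : ∀ j, 2 ∣ N' 0 j ∧ 2 ∣ N' 0 j + N' 1 j ∧ 2 ∣ N' 0 j + N' 2 j ∧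
      2 ∣ N' 0 j + N' 3 j ∧ 2 ∣ N' 0 j + N' 4 j := by
    intro j
    have h1 := hp 1 j
    have h2 := hp 2 j
    have h3 := hp 3 j
    have h4 := hp 4 j
    have hs := congrFun (congrFun horth j) j
    simp [Mm, Matrix.mul_apply, Fin.sum_univ_five] at h1 h2 h3 h4 hs
    exact ⟨even_col _ _ _ _ _ hs h1 h2 h3 h4, h1, h2, h3, h4⟩
  have hev : ∀ i j, ∃ c, N' i j = 2 * c := by
    intro i j
    obtain ⟨h0, h1, h2, h3, h4⟩ := hev0 j
    change 2 ∣ N' i j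
    fin_cases i <;> simp <;> omega
  choose N hN using hev
  have hNN : N' = (2 : ℤ) • (Matrix.of N) := by
    ext i j; simp [hN]
  refine ⟨Matrix.of N, ?_, ?_⟩
  · apply smul_cancel2
    apply smul_cancel2
    rw [hNN] at horth
    simp only [Matrix.transpose_smul, smul_smul, Matrix.mul_smul, Matrix.smul_mul, Matrix.mul_one, Matrix.one_mul] at horth ⊢
    exact horth
  · apply smul_cancel2
    rw [← hM, hNN, Matrix.smul_mul]

lemma exists_P (N : Matrix (Fin 5) (Fin 5) ℤ) (hN : Nᵀ * N = 1) :
    ∃ P : Matrix (Fin 5) (Fin 5) ℤ, (IsUnit P.det ∧ Pᵀ * Amat 5 * P = Amat 5) ∧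
      N * Mm = Mm * P := by
  have hodd : ∀ j, ∃ c, N 0 j + N 1 j + N 2 j + N 3 j + N 4 j = 2 * c + 1 := by
    intro j
    have hs := congrFun (congrFun hN j) j
    simp [Matrix.mul_apply, Fin.sum_univ_five] at hs
    have key : ∀ x : ℤ, ∃ c, x * x = x + 2 * c := by
      intro x
      obtain ⟨c, hc⟩ := Int.even_mul_pred_self x
      exact ⟨c, by linarith [mul_sub x x 1]⟩
    obtain ⟨a, ha⟩ := key (N 0 j)
    obtain ⟨b, hb⟩ := key (N 1 j)
    obtain ⟨c, hc⟩ := key (N 2 j)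
    obtain ⟨d, hd⟩ := key (N 3 j)
    obtain ⟨e, he⟩ := key (N 4 j)
    exact ⟨-(a+b+c+d+e), by linarith⟩
  have hex : ∃ P : Matrix (Fin 5) (Fin 5) ℤ, Km * (N * Mm) = (2 : ℤ) • P := by
    have : ∀ i j, ∃ c, (Km * (N * Mm)) i j = 2 * c := by
      intro i j
      change 2 ∣ (Km * (N * Mm)) i j
      obtain ⟨c0, h0⟩ := hodd 0
      obtain ⟨c1, h1⟩ := hodd 1
      obtain ⟨c2, h2⟩ := hodd 2
      obtain ⟨c3, h3⟩ := hodd 3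
      obtain ⟨c4, h4⟩ := hodd 4
      fin_cases i <;> fin_cases j <;>
        simp [Km, Mm, Matrix.mul_apply, Fin.sum_univ_five] <;> omega
    choose P hP using this
    exact ⟨Matrix.of P, by ext i j; simp [hP]⟩
  obtain ⟨P, hP⟩ := hex
  have hMP : N * Mm = Mm * P := by
    apply smul_cancel2
    rw [← Matrix.mul_smul Mm, ← hP, ← Matrix.mul_assoc, Mm_Km]
    simp only [Matrix.mul_smul, Matrix.smul_mul, Matrix.mul_one, Matrix.one_mul]
  refine ⟨P, ⟨?_, ?_⟩, hMP⟩
  · have hdM : Mm.det ≠ 0 := by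
      intro h0
      have := congrArg Matrix.det Mm_Km
      rw [Matrix.det_mul, h0, Matrix.det_smul] at this
      simp at this
    have h1 := congrArg Matrix.det hMP
    rw [Matrix.det_mul, Matrix.det_mul, mul_comm] at h1
    rw [← mul_left_cancel₀ hdM h1]
    have h2 := congrArg Matrix.det hN
    rw [Matrix.det_mul, Matrix.det_one] at h2
    exact IsUnit.of_mul_eq_one_right _ h2
  · rw [Amat_eq]
    have h1 : Pᵀ * (Mmᵀ * Mm) * P = (Mm * P)ᵀ * (Mm * P) := by
      simp only [Matrix.transpose_mul, Matrix.mul_assoc]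
    have h2 : (N * Mm)ᵀ * (N * Mm) = Mmᵀ * (Nᵀ * N) * Mm := by
      simp only [Matrix.transpose_mul, Matrix.mul_assoc]
    rw [Matrix.mul_smul, Matrix.smul_mul, h1, ← hMP, h2, hN, Matrix.mul_one]

/-- For h = 5, the group of isometries of the symmetric bilinear form represented by
A_5 = Q_5 + Q_5ᵀ, i.e. {P ∈ GL_5(ℤ) : Pᵀ A_5 P = A_5}, is finite of order 3840. -/
theorem isometry_group_order_h5 :
    Nat.card {P : Matrix (Fin 5) (Fin 5) ℤ // IsUnit P.det ∧ Pᵀ * Amat 5 * P = Amat 5} =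
      3840 := by
  rw [← card_orth]
  symm
  choose f hf hf' using exists_P
  refine Nat.card_eq_of_bijective (fun N => ⟨f N.1 N.2, hf N.1 N.2⟩) ⟨?_, ?_⟩
  · rintro ⟨N, hN⟩ ⟨L, hL⟩ h
    have h' : f N hN = f L hL := congrArg Subtype.val h
    apply Subtype.ext
    apply Mm_cancel_right
    change N * Mm = L * Mm
    rw [hf' N hN, hf' L hL, h']
  · rintro ⟨P, hd, hP⟩
    obtain ⟨N, hN, hNM⟩ := exists_N P hd hP
    refine ⟨⟨N, hN⟩, Subtype.ext (Mm_cancel ?_)⟩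
    change Mm * f N hN = Mm * P
    rw [← hf' N hN, hNM]
end
end
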